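/- For any α ∈ [0,1] and any n ≥ 1 for which the n-th step of Shulga's algorithm applied to α is defined, the Shulga sequences satisfy b_n ≥ n. -/

import Mathlib

/-!
The argument follows the complete quotients of the two continued fractions. Let `Uₙ` be the complete
quotient of `α - [0; c₁, …, cₙ₋₁]` whose integer part is `bₙ - 1`, let `Vₙ` be the complete quotient
of `α - [0; b₁, …, bₙ]` whose integer part is `cₙ`, and write `Uₙ = bₙ - dₙ`, `Vₙ = cₙ + tₙ` with
`0 < dₙ ≤ 1` and `0 ≤ tₙ < 1`. The convergent denominators cancel, and what remains is the recursion
`Uₙ₊₁ = (cₙ - 1 / tₙ₋₁) / (tₙ * dₙ)`, `Vₙ₊₁ = (bₙ₊₁ + 1 / dₙ) / (tₙ * dₙ₊₁)`, started by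
`U₁ = 1 / α = 1 / t₀` and `V₁ = b₁ * U₁ / d₁` (`Orbit`; the algorithm is shown to follow it in
`inv_one` and `inv_succ`).

From `n = 2` on the recursion gives `bₙ₊₁ ≥ bₙ`, with `cₙ = bₙ + 1` whenever `bₙ₊₁ = bₙ`
(`mono_step`). In an induction on `n` it remains to exclude `bₙ₊₁ = bₙ = n`. Such a stall forces
`dₙ` to be close to `1` and bounds `1 / tₙ₋₁` from below (`stall_bounds`). On the other hand
`Uₙ = n - dₙ` is then close to `n - 1`, and the recursion one step earlier, together with
`bₙ₋₁ ≥ n - 1` and `cₙ₋₁ ≥ bₙ₋₁ + 1`, bounds `1 / tₙ₋₁` from above. The two bounds are incompatible: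
see `stall_thrice` for `bₙ₋₁ ≥ n`, and `stall_large` and `stall_three` for `bₙ₋₁ = n - 1` with
`n ≥ 4` and `n = 3`. For `n = 2` the first digits are `b₁ = c₁ = 2` (`first_digits`), and a direct
estimate suffices; all of this is put together in `Orbit.le`.
-/

noncomputable section

namespace ShulgaPaper

open Filter Topology

/-- The value of the finite continued fraction `[0; a₁, …, aₙ]`
(the empty continued fraction has value `0`). -/
def cf : List ℕ → ℝ
  | [] => 0
  | a :: l => 1 / ((a : ℝ) + cf l)

/-- Iterates of the Gauss map, starting from the fractional part of `x`. -/
def gaussIter (x : ℝ) : ℕ → ℝ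
  | 0 => Int.fract x
  | n + 1 => Int.fract (1 / gaussIter x n)

/-- The `n`-th partial quotient `aₙ(x)` of the continued fraction expansion of `x`
(for `n ≥ 1`; a junk value is returned if it is undefined). -/
def pq (x : ℝ) (n : ℕ) : ℕ := ⌊1 / gaussIter x (n - 1)⌋₊

/-- The `n`-th partial quotient `aₙ(x)` of `x` is defined (`n ≥ 1`), i.e. `n` does not
exceed the length of the continued fraction expansion of `x`. -/
def pqDefined (x : ℝ) (n : ℕ) : Prop := gaussIter x (n - 1) ≠ 0

/-- The set `G` of real numbers that are rational or whose partial quotients diverge. -/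
def G : Set ℝ :=
  {x | (∃ q : ℚ, x = (q : ℝ)) ∨ Tendsto (fun n => pq x n) atTop atTop}

/-- The list of pairs `(b_k, c_k)`, `k = 1, …, n`, produced by (a totalized version of)
Shulga's algorithm applied to `α`. -/
def shulgaList (α : ℝ) : ℕ → List (ℕ × ℕ)
  | 0 => []
  | n + 1 =>
      let L := shulgaList α n
      let b := pq (α - cf (L.map Prod.snd)) (n + 1) + 1
      let c := pq (α - cf (L.map Prod.fst ++ [b])) (n + 1)
      L ++ [(b, c)]

/-- The list `[b₁, …, bₙ]` of Shulga's algorithm applied to `α`. -/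
def bList (α : ℝ) (n : ℕ) : List ℕ := (shulgaList α n).map Prod.fst

/-- The list `[c₁, …, cₙ]` of Shulga's algorithm applied to `α`. -/
def cList (α : ℝ) (n : ℕ) : List ℕ := (shulgaList α n).map Prod.snd

/-- `bₙ` of Shulga's algorithm applied to `α` (for `n ≥ 1`). -/
def shulgaB (α : ℝ) (n : ℕ) : ℕ := ((shulgaList α n).getLast?.getD (0, 0)).1

/-- `cₙ` of Shulga's algorithm applied to `α` (for `n ≥ 1`). -/
def shulgaC (α : ℝ) (n : ℕ) : ℕ := ((shulgaList α n).getLast?.getD (0, 0)).2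

/-- The first `n` steps of Shulga's algorithm applied to `α` are defined: for each step
`k + 1 ≤ n`, the partial quotients `a_{k+1}(α - [0;c₁,…,c_k])` and
`a_{k+1}(α - [0;b₁,…,b_{k+1}])` defining `b_{k+1}` and `c_{k+1}` exist
(in particular the algorithm has not stopped before step `n`). -/
def shulgaDefined (α : ℝ) (n : ℕ) : Prop :=
  ∀ k < n, pqDefined (α - cf (cList α k)) (k + 1) ∧
    pqDefined (α - cf (bList α (k + 1))) (k + 1)

/-- The half-open interval whose included endpoint is `x` and excluded endpoint is `y`,
the smaller one being the left endpoint. -/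
def hIco (x y : ℝ) : Set ℝ := if x ≤ y then Set.Ico x y else Set.Ioc y x

/-- The list `[a 1, …, a n]`. -/
def listOf (a : ℕ → ℕ) (n : ℕ) : List ℕ := (List.range n).map fun i => a (i + 1)

/-- The interval `B_k` determined by the digits `b`, `c` (`k ≥ 1`). -/
def Bset (b c : ℕ → ℕ) (k : ℕ) : Set ℝ :=
  hIco (cf (listOf b (k - 1) ++ [b k - 1]) + cf (listOf c (k - 1)))
    (cf (listOf b k) + cf (listOf c (k - 1)))

/-- The interval `C_k` determined by the digits `b`, `c` (`k ≥ 1`). -/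
def Cset (b c : ℕ → ℕ) (k : ℕ) : Set ℝ :=
  hIco (cf (listOf c k) + cf (listOf b k))
    (cf (listOf c (k - 1) ++ [c k + 1]) + cf (listOf b k))

/-- `A₀ = [0,1]` and `Aₙ = ⋂_{k=1}^{n} (B_k ∩ C_k)` for `n ≥ 1`. -/
def Aset (b c : ℕ → ℕ) : ℕ → Set ℝ
  | 0 => Set.Icc 0 1
  | n + 1 => ⋂ k ∈ Finset.Icc 1 (n + 1), (Bset b c k ∩ Cset b c k)

/-- The denominators of the convergents of `[0; a 1, a 2, …]`:
`q₀ = 1`, `q₁ = a 1`, `q_k = a k * q_{k-1} + q_{k-2}`. -/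
def qden (a : ℕ → ℕ) : ℕ → ℕ
  | 0 => 1
  | 1 => a 1
  | n + 2 => a (n + 2) * qden a (n + 1) + qden a n
/-! ### Continued fractions with a real tail -/

/-- `cfTail [a₁, …, aₙ] u` is `[0; a₁, …, aₙ + u]` (and `u` itself for the empty list), so that
`u` is the `n`-th iterate of the Gauss map at this number when `0 < u < 1`. -/
def cfTail : List ℕ → ℝ → ℝ
  | [], u => u
  | a :: l, u => 1 / ((a : ℝ) + cfTail l u)

lemma cf_eq_cfTail (l : List ℕ) : cf l = cfTail l 0 := by
  induction l with
  | nil => rfl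
  | cons a l ih => simp [cf, cfTail, ih]

lemma cfTail_append (l : List ℕ) (a : ℕ) (u : ℝ) :
    cfTail (l ++ [a]) u = cfTail l (1 / ((a : ℝ) + u)) := by
  induction l with
  | nil => rfl
  | cons x l ih => simp [cfTail, ih]

lemma cfTail_mem (l : List ℕ) (hl : ∀ a ∈ l, 1 ≤ a) (u : ℝ) (h0 : 0 < u) (h1 : u < 1) :
    0 < cfTail l u ∧ cfTail l u < 1 := by
  induction l with
  | nil => exact ⟨h0, h1⟩
  | cons a l ih =>
    obtain ⟨h2, -⟩ := ih fun x hx => hl x (by simp [hx])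
    have ha : (1 : ℝ) ≤ a := by exact_mod_cast hl a (by simp)
    simp only [cfTail]
    refine ⟨by positivity, ?_⟩
    rw [div_lt_one (by linarith)]
    linarith

lemma gaussIter_succ_left (x : ℝ) (h0 : 0 ≤ x) (h1 : x < 1) (n : ℕ) :
    gaussIter x (n + 1) = gaussIter (1 / x) n := by
  induction n with
  | zero => simp [gaussIter, Int.fract_eq_self.2 ⟨h0, h1⟩]
  | succ n ih => rw [gaussIter, ih, gaussIter]

lemma gaussIter_nat_add (a : ℕ) (x : ℝ) (n : ℕ) :
    gaussIter ((a : ℝ) + x) n = gaussIter x n := by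
  induction n with
  | zero => simp [gaussIter]
  | succ n ih => rw [gaussIter, ih, gaussIter]

lemma gaussIter_cfTail (l : List ℕ) (hl : ∀ a ∈ l, 1 ≤ a) (u : ℝ) (h0 : 0 < u) (h1 : u < 1) :
    gaussIter (cfTail l u) l.length = u := by
  induction l with
  | nil => simp [cfTail, gaussIter, Int.fract_eq_self.2 ⟨h0.le, h1⟩]
  | cons a l ih =>
    have hm := cfTail_mem (a :: l) hl u h0 h1
    rw [List.length_cons, gaussIter_succ_left _ hm.1.le hm.2]
    simp only [cfTail, one_div_one_div]
    rw [gaussIter_nat_add]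
    exact ih fun x hx => hl x (by simp [hx])

/-- The Gauss map reaches `0` after `n` steps from `[0; a₁, …, aₙ]` when `aₙ ≥ 2`. -/
lemma gaussIter_cf (l : List ℕ) (hl : ∀ a ∈ l, 1 ≤ a) (a : ℕ) (ha : 2 ≤ a) :
    gaussIter (cf (l ++ [a])) (l.length + 1) = 0 := by
  have ha' : (2 : ℝ) ≤ a := by exact_mod_cast ha
  rw [cf_eq_cfTail, cfTail_append, add_zero, gaussIter, gaussIter_cfTail l hl _ (by positivity)]
  · simp
  · rw [div_lt_one (by linarith)]
    linarith

/-- `u ↦ [0; a₁, …, aₙ + u]` is the Möbius map `u ↦ (p + u p') / (q + u q')`, where `p / q` and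
`p' / q'` are the last two convergents and `ε = (-1)ⁿ` is the determinant. -/
structure CfRep (l : List ℕ) (ε p p' q q' : ℝ) : Prop where
  eps : ε ≠ 0
  q_pos : 0 < q
  q'_nonneg : 0 ≤ q'
  det : p' * q - p * q' = ε
  val : ∀ u : ℝ, 0 ≤ u → cfTail l u = (p + u * p') / (q + u * q')

lemma CfRep.append {l : List ℕ} {ε p p' q q' : ℝ} (h : CfRep l ε p p' q q') (a : ℕ) (ha : 1 ≤ a) :
    CfRep (l ++ [a]) (-ε) (a * p + p') p (a * q + q') q := by
  have ha' : (1 : ℝ) ≤ a := by exact_mod_cast ha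
  have hq := h.q_pos
  have hq' := h.q'_nonneg
  refine ⟨neg_ne_zero.2 h.eps, by positivity, hq.le, by linear_combination -h.det, ?_⟩
  intro u hu
  rw [cfTail_append, h.val _ (by positivity)]
  have h1 : (a : ℝ) + u ≠ 0 := by positivity
  have h2 : q + 1 / ((a : ℝ) + u) * q' ≠ 0 := by positivity
  have h3 : (a : ℝ) * q + q' + u * q ≠ 0 := by positivity
  rw [div_eq_div_iff h2 h3]
  field_simp
  ring

/-- The difference of two values of the Möbius map of a list. -/
lemma CfRep.sub {l : List ℕ} {ε p p' q q' : ℝ} (h : CfRep l ε p p' q q') {u v : ℝ}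
    (hu : 0 ≤ u) (hv : 0 ≤ v) :
    cfTail l u - cfTail l v = ε * ((u - v) / ((q + u * q') * (q + v * q'))) := by
  have hq := h.q_pos
  have hq' := h.q'_nonneg
  have h1 : q + u * q' ≠ 0 := by positivity
  have h2 : q + v * q' ≠ 0 := by positivity
  rw [h.val u hu, h.val v hv, ← h.det]
  field_simp
  ring

/-! ### The dynamical system behind the algorithm -/

/-- The states `(n, bₙ, cₙ, dₙ, tₙ, eₙ)` that `n` steps of the algorithm can produce.
Here `bₙ - dₙ` and `cₙ + tₙ` are the complete quotients from which `bₙ` and `cₙ` are read off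
(so `0 < dₙ ≤ 1` and `0 ≤ tₙ < 1`), and `eₙ = cₙ - 1 / tₙ₋₁`, with `t₀ = α = 1 / (b₁ - d₁)`. -/
inductive Orbit : ℕ → ℕ → ℕ → ℝ → ℝ → ℝ → Prop
  | start (b c : ℕ) (d t : ℝ) (hb : 2 ≤ b) (hd0 : 0 < d) (hd1 : d ≤ 1) (ht0 : 0 ≤ t) (ht1 : t < 1)
      (hc : (c : ℝ) + t = b * (b - d) / d) : Orbit 1 b c d t (c - (b - d))
  | step (n b c : ℕ) (d t e : ℝ) (h : Orbit n b c d t e) (ht : 0 < t) (b₂ c₂ : ℕ) (d₂ t₂ : ℝ)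
      (hd0 : 0 < d₂) (hd1 : d₂ ≤ 1) (ht0 : 0 ≤ t₂) (ht1 : t₂ < 1)
      (hb : (b₂ : ℝ) - d₂ = e / (t * d)) (hc : (c₂ : ℝ) + t₂ = (b₂ + 1 / d) / (t * d₂)) :
      Orbit (n + 1) b₂ c₂ d₂ t₂ (c₂ - 1 / t)

/-- Elementary bounds; `t * d < e` says that the next complete quotient `e / (t * d)` exceeds
`1`. -/
lemma Orbit.basic {n b c : ℕ} {d t e : ℝ} (h : Orbit n b c d t e) :
    2 ≤ b ∧ 2 ≤ c ∧ 0 < d ∧ d ≤ 1 ∧ 0 ≤ t ∧ t < 1 ∧ t * d < e := by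
  induction h with
  | start b c d t hb hd0 hd1 ht0 ht1 hc =>
    have hb' : (2 : ℝ) ≤ b := by exact_mod_cast hb
    have h1 : (b : ℝ) * (b - 1) ≤ c + t := by
      rw [hc, le_div_iff₀ hd0]
      nlinarith [mul_nonneg (by linarith : (0 : ℝ) ≤ b) (by linarith : (0 : ℝ) ≤ b - 1)]
    have h2 : (b : ℝ) < c + 1 := by nlinarith
    have h3 : b ≤ c := by
      have : b < c + 1 := by exact_mod_cast h2
      omega
    have h3' : (b : ℝ) ≤ c := by exact_mod_cast h3
    refine ⟨hb, by omega, hd0, hd1, ht0, ht1, ?_⟩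
    nlinarith
  | step n b c d t e h ht b₂ c₂ d₂ t₂ hd0 hd1 ht0 ht1 hb hc ih =>
    obtain ⟨-, -, hd, hd', -, ht', he⟩ := ih
    have h1 : 1 < e / (t * d) := by rwa [one_lt_div (by positivity)]
    have hb2 : 2 ≤ b₂ := by
      have : (1 : ℝ) < b₂ := by linarith
      exact_mod_cast this
    have hb2' : (2 : ℝ) ≤ b₂ := by exact_mod_cast hb2
    have hD : 1 ≤ 1 / d := by rwa [one_le_div hd]
    have hT : 1 ≤ 1 / t := by rw [one_le_div ht]; exact ht'.le
    have h2 : (b₂ : ℝ) + 1 ≤ c₂ + t₂ := by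
      rw [hc, le_div_iff₀ (by positivity)]
      nlinarith [mul_le_one₀ ht'.le hd0.le hd1]
    have h3 : 2 ≤ c₂ := by
      have : (1 : ℝ) < c₂ := by linarith
      exact_mod_cast this
    refine ⟨hb2, h3, hd0, hd1, ht0, ht1, ?_⟩
    -- `c₂ + t₂ - 1 / t = (b₂ - d₂ + 1 / d) / (t * d₂)`, which is at least `b₂`
    have h4 : (c₂ : ℝ) - 1 / t = (b₂ + 1 / d - d₂) / (t * d₂) - t₂ := by
      have : (c₂ : ℝ) = (b₂ + 1 / d) / (t * d₂) - t₂ := by linarith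
      rw [this]
      field_simp
      ring
    have h5 : (b₂ : ℝ) ≤ (b₂ + 1 / d - d₂) / (t * d₂) := by
      rw [le_div_iff₀ (by positivity)]
      nlinarith [mul_le_one₀ ht'.le hd0.le hd1]
    rw [h4]
    nlinarith

/-- One step never lets `b` drop once `n ≥ 2`, and `b` can stay put only if `c = b + 1`.
Here `D = 1 / dₙ₋₁`, `T = 1 / tₙ₋₁`. -/
lemma mono_step {b c b₃ : ℕ} {d t D T d₃ : ℝ} (hb : 2 ≤ b) (hd0 : 0 < d) (hd1 : d ≤ 1)
    (ht0 : 0 < t) (ht1 : t < 1) (hD : 1 ≤ D) (hT : 1 < T) (hd3 : 0 < d₃)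
    (hc : (c : ℝ) + t = (b + D) * T / d) (hU : (b₃ : ℝ) - d₃ = (c - T) / (t * d)) :
    b ≤ b₃ ∧ b + 1 ≤ c ∧ (b₃ = b → c = b + 1) := by
  have hb' : (2 : ℝ) ≤ b := by exact_mod_cast hb
  have hc' : ((c : ℝ) + t) * d = (b + D) * T := by rw [hc]; field_simp
  have hU' : (c : ℝ) - T = (b₃ - d₃) * (t * d) := by rw [hU]; field_simp
  have h1 : b + 1 ≤ c := by
    have : (b : ℝ) < c := by nlinarith
    exact_mod_cast this
  have h1' : (b : ℝ) + 1 ≤ c := by exact_mod_cast h1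
  have hTle : (b + 1) * T ≤ c + t := by nlinarith
  have htd : t * d ≤ t := by nlinarith
  have hcT : (c : ℝ) - T ≤ b₃ * t := by
    rw [hU']
    have : (0 : ℝ) ≤ b₃ := by positivity
    nlinarith [mul_pos ht0 hd0]
  have hmain : (c : ℝ) * b - t ≤ b₃ * t * (b + 1) := by nlinarith
  refine ⟨?_, h1, ?_⟩
  · by_contra hlt
    have h2 : (b₃ : ℝ) + 1 ≤ b := by
      have : b₃ + 1 ≤ b := by omega
      exact_mod_cast this
    have h3 : (b₃ : ℝ) * t * (b + 1) ≤ (b - 1) * t * (b + 1) := by gcongr; linarith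
    nlinarith
  · rintro rfl
    have h2 : (c : ℝ) * b₃ < (b₃ + 2) * b₃ := by nlinarith
    have h3 : (c : ℝ) < b₃ + 2 := lt_of_mul_lt_mul_right h2 (by positivity)
    have : c < b₃ + 2 := by exact_mod_cast h3
    omega

/-! ### Growth of the digits -/

/-- What `bₙ₊₁ = bₙ = b` says about `d = dₙ`, `D = 1 / dₙ₋₁` and `y = 1 / tₙ₋₁`: eliminating `tₙ`
bounds `y` from both sides, and the two bounds force `d` close to `1`. -/
lemma stall_bounds {b d t D y : ℝ} (hb : 2 ≤ b) (hd0 : 0 < d) (hd1 : d ≤ 1)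
    (ht1 : t < 1) (hD : 1 ≤ D)
    (h1 : b + 1 - y < b * (t * d)) (h2 : (b + 1 + t) * d = (b + D) * y) :
    (b + 1) * (1 + b * d) < y * (1 + b ^ 2 + b * D) ∧
      (b + 1) ^ 2 < d * ((b + 1) ^ 2 + 1) := by
  have h3 : (b + 1) * (1 + b * d) < y * (1 + b ^ 2 + b * D) := by nlinarith
  have h4 : (b + D) * y < d * (b + 2) := by nlinarith
  refine ⟨h3, ?_⟩
  have h5 : (b + D) * ((b + 1) * (1 + b * d)) < d * (b + 2) * (1 + b ^ 2 + b * D) := by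
    have e1 := mul_lt_mul_of_pos_left h3 (by linarith : 0 < b + D)
    have e2 := mul_lt_mul_of_pos_right h4 (by nlinarith : 0 < 1 + b ^ 2 + b * D)
    linarith
  -- the gap in `h5` grows with `D`, at rate `b + 1 - b * d`
  have h6 : 0 ≤ (D - 1) * (b + 1 - b * d) :=
    mul_nonneg (by linarith) (by nlinarith)
  nlinarith

/-- The bounds of `stall_bounds` contradict the upper bound `hy` on `y = 1 / tₙ₋₁` when `b ≥ 4`.
The bound `hy` comes from `cₙ₋₁ ≥ b` and `bₙ₋₁ = b - 1`. -/
lemma stall_large {b d t D y : ℝ} (hb : 4 ≤ b) (hd0 : 0 < d) (hd1 : d ≤ 1)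
    (ht1 : t < 1) (hD : 1 ≤ D)
    (h1 : b + 1 - y < b * (t * d)) (h2 : (b + 1 + t) * d = (b + D) * y)
    (hy : b * (y * (b * D - 1)) ≤ b * (b - d) + 1) : False := by
  obtain ⟨h3, h4⟩ := stall_bounds (by linarith) hd0 hd1 ht1 hD h1 h2
  have hE : 0 ≤ b * D - b := by nlinarith
  have h5 : b * ((b + 1) * (1 + b * d)) * (b * D - 1) <
      (b * (b - d) + 1) * (1 + b ^ 2 + b * D) := by
    have e1 := mul_lt_mul_of_pos_left h3
      (mul_pos (by linarith) (by linarith) : 0 < b * (b * D - 1))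
    have e2 := mul_le_mul_of_nonneg_right hy (by nlinarith : 0 ≤ 1 + b ^ 2 + b * D)
    linarith
  have h6 : 0 ≤ (b * D - b) * (b * ((b + 1) * (1 + b * d)) - (b * (b - d) + 1)) :=
    mul_nonneg hE (by nlinarith [mul_pos (by linarith : 0 < b) hd0])
  -- the inequality `h5` with `D` replaced by `1`
  have h7 : b * ((b + 1) * (1 + b * d)) * (b - 1) < (b * (b - d) + 1) * (1 + b ^ 2 + b) := by
    linarith
  have h8 : b ^ 3 - 2 * b ^ 2 - b - 1 < (1 - d) * (b ^ 4 + b ^ 3 + b) := by linarith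
  have h9 : (1 - d) * (b ^ 2 + 2 * b + 2) < 1 := by linarith
  have h10 : (b ^ 3 - 2 * b ^ 2 - b - 1) * (b ^ 2 + 2 * b + 2) < b ^ 4 + b ^ 3 + b := by
    have e1 := mul_lt_mul_of_pos_right h8 (by positivity : 0 < b ^ 2 + 2 * b + 2)
    have e2 := mul_lt_mul_of_pos_right h9 (by positivity : 0 < b ^ 4 + b ^ 3 + b)
    linarith
  obtain ⟨z, hz, rfl⟩ : ∃ z : ℝ, 0 ≤ z ∧ b = 4 + z := ⟨b - 4, by linarith, by ring⟩
  nlinarith [pow_nonneg hz 2, pow_nonneg hz 3, pow_nonneg hz 4, pow_nonneg hz 5]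

/-- If `bₙ₋₁ ≥ b`, then `bₙ` and `bₙ₊₁` cannot both be equal to `b`. Here `D = 1 / dₙ₋₁` and
`y = 1 / tₙ₋₁`, while `b'`, `c'`, `D'`, `T'` stand for `bₙ₋₁`, `cₙ₋₁`, `1 / dₙ₋₂`, `1 / tₙ₋₂`. -/
lemma stall_thrice {b b' c' d t D y D' T' : ℝ} (hb : 2 ≤ b) (hd0 : 0 < d) (hd1 : d ≤ 1)
    (ht1 : t < 1) (hD : 1 ≤ D) (hy1 : 1 < y)
    (h1 : b + 1 - y < b * (t * d)) (h2 : (b + 1 + t) * d = (b + D) * y)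
    (hD' : 1 ≤ D') (hb' : b ≤ b') (hc' : b' + 1 ≤ c')
    (h3 : c' + 1 / y = (b' + D') * (T' * D)) (h4 : b - d = y * (c' * D - T' * D)) : False := by
  obtain ⟨-, h5⟩ := stall_bounds hb hd0 hd1 ht1 hD h1 h2
  have hy0 : 0 < y := by linarith
  have hc0 : 0 < c' := by linarith
  have h6 : y * (c' + 1 / y) = y * c' + 1 := by field_simp
  have hTD : 0 ≤ T' * D := by
    by_contra hneg
    have : 0 < c' + 1 / y := by positivity
    nlinarith
  have h7 : (b + 1) * (y * (T' * D)) ≤ y * c' + 1 := by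
    rw [← h6, h3]
    have : (b + 1) * (T' * D) ≤ (b' + D') * (T' * D) := by gcongr
    nlinarith
  have h8 : (b + 1) * (b - d) ≥ y * c' * b - 1 := by
    have : y * c' ≤ y * c' * D := by
      have : 0 ≤ y * c' := by positivity
      nlinarith
    nlinarith
  have h9 : b + 1 ≤ y * c' := by nlinarith
  nlinarith

/-- The case `n = b = 3` of `stall_large`. There `b₁ = c₁ = b₂ = 2`, and this knowledge of the first
digits gives the sharper bound `hy` on `y = 1 / t₂`. -/
lemma stall_three {d t D y : ℝ} (hd0 : 0 < d) (hd1 : d ≤ 1)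
    (ht1 : t < 1) (hD : 1 ≤ D)
    (h1 : 3 + 1 - y < 3 * (t * d)) (h2 : (3 + 1 + t) * d = (3 + D) * y)
    (hy : y * (37 * D / 12 - 1) ≤ 10 / 3 - d) : False := by
  obtain ⟨h3, h4⟩ := stall_bounds (by norm_num) hd0 hd1 ht1 hD h1 h2
  have h5 : (3 + 1) * (1 + 3 * d) * (37 * D / 12 - 1) < (10 / 3 - d) * (1 + 3 ^ 2 + 3 * D) := by
    have e1 := mul_lt_mul_of_pos_right h3 (by linarith : 0 < 37 * D / 12 - 1)
    have e2 := mul_le_mul_of_nonneg_right hy (by positivity : 0 ≤ 1 + (3 : ℝ) ^ 2 + 3 * D)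
    linarith
  nlinarith

/-- If `b₂ = 2`, then `b₁ = c₁ = 2`. -/
lemma first_digits {b c b₂ : ℕ} {d t d₂ : ℝ} (hd0 : 0 < d) (hd1 : d ≤ 1) (hb : 2 ≤ b)
    (ht0 : 0 < t) (ht1 : t < 1) (hc : (c : ℝ) + t = b * (b - d) / d) (hd₂ : 0 < d₂)
    (hU : (b₂ : ℝ) - d₂ = (c - (b - d)) / (t * d)) (hb₂ : b₂ = 2) : b = 2 ∧ c = 2 := by
  have hb' : (2 : ℝ) ≤ b := by exact_mod_cast hb
  have hU' : (c : ℝ) - (b - d) = (b₂ - d₂) * (t * d) := by rw [hU]; field_simp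
  have h1 : (b : ℝ) * (b - 1) ≤ c + t := by
    rw [hc, le_div_iff₀ hd0]
    nlinarith [mul_nonneg (by linarith : (0 : ℝ) ≤ b) (by linarith : (0 : ℝ) ≤ b - 1)]
  have htd : 0 < t * d := by positivity
  have htd' : t * d < d := by nlinarith
  have h2 : (c : ℝ) - (b - d) < 2 * (t * d) := by
    rw [hU', hb₂]
    push_cast
    nlinarith
  have hb3 : b < 3 := by
    by_contra hcon
    have : (3 : ℝ) ≤ b := by exact_mod_cast not_lt.1 hcon
    nlinarith
  have hb2 : b = 2 := by omega
  subst hb2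
  refine ⟨rfl, ?_⟩
  push_cast at *
  have h3 : 2 ≤ c := by
    have : (1 : ℝ) < c := by linarith
    exact_mod_cast this
  have h4 : c < 3 := by
    have : (c : ℝ) < 3 := by linarith
    exact_mod_cast this
  omega

lemma Orbit.pos {n b c : ℕ} {d t e : ℝ} (h : Orbit n b c d t e) : 1 ≤ n := by
  cases h <;> omega

set_option maxHeartbeats 1000000 in
/-- By strong induction `bₙ ≥ n`, so with `bₙ₊₁ ≥ bₙ` only `bₙ₊₁ = bₙ = n` could violate
`bₙ₊₁ ≥ n + 1`. The induction hypothesis at `n - 1` then gives either `bₙ₋₁ ≥ n` or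
`bₙ₋₁ = n - 1`, and one of the stall lemmas applies. -/
theorem Orbit.le (n : ℕ) : ∀ {b c : ℕ} {d t e : ℝ}, Orbit n b c d t e → n ≤ b := by
  induction n using Nat.strong_induction_on with
  | _ n ih =>
  intro b₃ c₃ d₃ t₃ e₃ h₃
  cases h₃ with
  | start hb => omega
  | step n b c d t e h ht _ _ _ _ hd30 hd31 ht30 ht31 hU₃ hc₃ =>
  obtain ⟨hb, hc2, hd0, hd1, -, ht1, -⟩ := h.basic
  have hn := ih n (by omega) h
  cases h with
  | start =>
    -- a second digit is at least `2` because its complete quotient exceeds `1`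
    have := (Orbit.step _ _ _ _ _ _ (.start b c d t ‹_› ‹_› ‹_› ‹_› ‹_› ‹_›) ht _ _ _ _
      hd30 hd31 ht30 ht31 hU₃ hc₃).basic.1
    omega
  | step n b' c' d' t' e' h' ht' _ _ _ _ _ _ _ _ hU hc =>
  obtain ⟨hb'2, hc'2, hd'0, hd'1, ht'0, ht'1, -⟩ := h'.basic
  have hn' := ih n (by omega) h'
  have hD : 1 ≤ 1 / d' := by rwa [one_le_div hd'0]
  have hy : 1 < 1 / t' := by rwa [one_lt_div ht']
  have hc0 : (c : ℝ) + t = (b + 1 / d') * (1 / t') / d := by rw [hc]; field_simp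
  obtain ⟨hmono, -, hstall⟩ := mono_step hb hd0 hd1 ht ht1 hD hy hd30 hc0 hU₃
  -- only a stall remains: the last two digits are both equal to the index of the first of them
  by_contra hcon
  obtain rfl : b₃ = b := by omega
  obtain rfl : b₃ = n + 1 := by omega
  obtain rfl := hstall rfl
  have hbR : (2 : ℝ) ≤ ((n + 1 : ℕ) : ℝ) := by exact_mod_cast hb
  generalize hB : ((n + 1 : ℕ) : ℝ) = B at *
  have hBc : ((n + 1 + 1 : ℕ) : ℝ) = B + 1 := by rw [← hB]; push_cast; ring
  rw [hBc] at hc0 hU₃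
  set y := 1 / t' with hydef
  set D := 1 / d' with hDdef
  have hty : t' = 1 / y := by rw [hydef]; simp
  have h1 : B + 1 - y < B * (t * d) := by
    have : B + 1 - y = (B - d₃) * (t * d) := by rw [hU₃]; field_simp
    rw [this]
    have : 0 < t * d := by positivity
    nlinarith
  have h2 : (B + 1 + t) * d = (B + D) * y := by rw [hc0]; field_simp
  have hUy : B - d = y * (e' * D) := by rw [hU, hydef, hDdef]; field_simp
  cases h' with
  | start =>
    rename_i hcinit
    have hB2 : B = 2 := by rw [← hB]; norm_num
    obtain ⟨rfl, rfl⟩ := first_digits hd'0 hd'1 hb'2 ht' ht'1 hcinit hd0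
      (b₂ := 2) (by rw [← hU, hB2]; norm_num) rfl
    subst hB2
    -- the stall is `b₃ = b₂ = 2`, whence `b₁ = 2` and `c₁ = 2`; now `c₁ + t₁ = 2 * (2 - d₁) / d₁`
    push_cast at *
    have e1 : t' = 4 * D - 4 := by
      have : t' = 2 * (2 - d') / d' - 2 := by linarith
      rw [this, hDdef]; field_simp; ring
    have e2 : d' * D = 1 := by rw [hDdef]; field_simp
    have e3 : t' * y = 1 := by rw [hydef]; field_simp
    have e4 : 2 - d = y := by rw [hUy]; linear_combination y * e2
    have e5 : y * (4 * D - 4) = 1 := by rw [← e1]; linarith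
    nlinarith
  | step n b'' c'' d'' t'' e'' h'' ht'' _ _ _ _ _ _ _ _ hU' hc' =>
  obtain ⟨hb''2, hc''2, hd''0, hd''1, -, ht''1, -⟩ := h''.basic
  have hD'' : 1 ≤ 1 / d'' := by rwa [one_le_div hd''0]
  have hy'' : 1 < 1 / t'' := by rwa [one_lt_div ht'']
  have hc'0 : (c' : ℝ) + t' = (b' + 1 / d'') * (1 / t'') / d' := by rw [hc']; field_simp
  obtain ⟨hmono', hc'1, -⟩ := mono_step hb'2 hd'0 hd'1 ht' ht'1 hD'' hy'' hd0 hc'0 (hB ▸ hU)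
  have h3 : (c' : ℝ) + 1 / y = (b' + 1 / d'') * (1 / t'' * D) := by
    rw [← hty, hc'0, hDdef]; field_simp
  have h4 : B - d = y * (c' * D - 1 / t'' * D) := by rw [hUy]; ring
  have hc'R : (b' : ℝ) + 1 ≤ c' := by exact_mod_cast hc'1
  by_cases hb'B : B ≤ b'
  · exact stall_thrice hbR hd0 hd1 ht1 hD hy h1 h2 hD'' hb'B hc'R h3 h4
  have hb'n : b' = n + 1 := by
    have : b' < n + 1 + 1 := by
      rw [← hB] at hb'B
      exact_mod_cast not_le.1 hb'B
    omega
  have hb'R : (b' : ℝ) = B - 1 := by rw [hb'n, ← hB]; push_cast; ring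
  have hB3 : 3 ≤ B := by
    rw [← hB]
    have : 3 ≤ n + 1 + 1 := by omega
    exact_mod_cast this
  have hy0 : 0 < y := by linarith
  have hyc : y * (c' + 1 / y) = y * c' + 1 := by field_simp
  have hyB : y * B ≤ y * c' := by gcongr; linarith
  cases h'' with
  | start =>
    rename_i hcinit
    have hb'2' : b' = 2 := by omega
    obtain ⟨rfl, rfl⟩ := first_digits hd''0 hd''1 hb''2 ht'' ht''1 hcinit hd'0 hU' hb'2'
    have hB3' : B = 3 := by rw [← hB]; norm_num
    subst hB3'
    push_cast at hcinit
    refine stall_three hd0 hd1 ht1 hD h1 h2 ?_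
    -- `c₁ + t₁ = 2 * (2 - d₁) / d₁` with `c₁ = 2`
    have e1 : 1 / d'' = 1 + t'' / 4 := by
      have : t'' = 2 * (2 - d'') / d'' - 2 := by linarith
      rw [this]; field_simp; ring
    rw [e1, hb'R] at h3
    have e2 : (c' : ℝ) + 1 / y = 3 * (1 / t'' * D) + D / 4 := by
      rw [h3]; field_simp; ring
    have e3 : y * c' + 1 = 3 * (y * (1 / t'' * D)) + y * D / 4 := by
      rw [← hyc, e2]; ring
    have e4 : 3 - d = y * c' * D - y * (1 / t'' * D) := by rw [h4]; ring
    have e5 : y * 3 * (3 * D - 1) ≤ y * c' * (3 * D - 1) :=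
      mul_le_mul_of_nonneg_right hyB (by linarith)
    linarith
  | step m _ _ _ _ _ hm =>
    refine stall_large ?_ hd0 hd1 ht1 hD h1 h2 ?_
    · rw [← hB]
      have : 4 ≤ m + 1 + 1 + 1 := by have := hm.pos; omega
      exact_mod_cast this
    have e1 : B * (1 / t'' * D) ≤ c' + 1 / y := by
      rw [h3]
      gcongr
      linarith
    have e2 : B * (y * (1 / t'' * D)) ≤ y * c' + 1 := by nlinarith
    have e3 : y * B * (B * D - 1) ≤ y * c' * (B * D - 1) :=
      mul_le_mul_of_nonneg_right hyB (by nlinarith)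
    have e4 : B * (B - d) = y * c' * (B * D) - B * (y * (1 / t'' * D)) := by rw [h4]; ring
    linarith

/-! ### From the algorithm to the dynamical system -/

lemma shulgaB_succ (α : ℝ) (n : ℕ) :
    shulgaB α (n + 1) = pq (α - cf (cList α n)) (n + 1) + 1 := by
  simp [shulgaB, shulgaList, cList]

lemma bList_succ (α : ℝ) (n : ℕ) : bList α (n + 1) = bList α n ++ [shulgaB α (n + 1)] := by
  rw [shulgaB_succ]
  simp [bList, cList, shulgaList]

lemma shulgaC_succ (α : ℝ) (n : ℕ) :
    shulgaC α (n + 1) = pq (α - cf (bList α (n + 1))) (n + 1) := by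
  rw [bList_succ, shulgaB_succ]
  simp [shulgaC, shulgaList, bList, cList]

lemma cList_succ (α : ℝ) (n : ℕ) : cList α (n + 1) = cList α n ++ [shulgaC α (n + 1)] := by
  rw [shulgaC_succ, bList_succ, shulgaB_succ]
  simp [bList, cList, shulgaList]

lemma bList_length (α : ℝ) (n : ℕ) : (bList α n).length = n := by
  induction n with
  | zero => rfl
  | succ n ih => rw [bList_succ, List.length_append, ih]; rfl

lemma cList_length (α : ℝ) (n : ℕ) : (cList α n).length = n := by
  induction n with
  | zero => rfl
  | succ n ih => rw [cList_succ, List.length_append, ih]; rfl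

/-- A number whose `n`-th complete quotient is `U > 1` has `(n + 1)`-st partial quotient `⌊U⌋`. -/
lemma pq_eq (l : List ℕ) (hl : ∀ a ∈ l, 1 ≤ a) (U : ℝ) (hU : 1 < U) (x : ℝ)
    (hx : x = cfTail l (1 / U)) : pq x (l.length + 1) = ⌊U⌋₊ := by
  have h0 : 0 < 1 / U := by positivity
  have h1 : 1 / U < 1 := by rw [div_lt_one (by linarith)]; exact hU
  rw [pq, Nat.add_sub_cancel, hx, gaussIter_cfTail l hl _ h0 h1, one_div_one_div]

/-- The situation after `n` steps: `α - [0; b₁, …, bₙ] = [0; c₁, …, cₙ + t]`, and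
`(b, c, d, t, e)` is a state as in `Orbit` with `b = bₙ`. The reals `q, q'` and `s, s'` are the last
two convergent denominators of `[0; b₁, …, bₙ]` and of `[0; c₁, …, cₙ]`.

The relation `rel₂` compares denominators in two expressions of
`α - [0; b₁, …, bₙ₋₁] - [0; c₁, …, cₙ₋₁]`: as `[0; b₁, …, bₙ - d] - [0; b₁, …, bₙ₋₁]`, and as
`[0; c₁, …, cₙ₋₁ + tₙ₋₁] - [0; c₁, …, cₙ₋₁]`. The relation `rel₁` does the same for
`α - [0; b₁, …, bₙ] - [0; c₁, …, cₙ₋₁]` and is then simplified by means of `rel₂`. -/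
structure Inv (α : ℝ) (n b c : ℕ) (d t e ε p p' q q' r r' s s' : ℝ) : Prop where
  orbit : Orbit n b c d t e
  hb : shulgaB α n = b
  b_pos : ∀ a ∈ bList α n, 1 ≤ a
  c_pos : ∀ a ∈ cList α n, 1 ≤ a
  b_rep : CfRep (bList α n) ε p p' q q'
  c_rep : CfRep (cList α n) ε r r' s s'
  q'_pos : 0 < q'
  s'_pos : 0 < s'
  tail : α - cf (bList α n) = cfTail (cList α n) t
  rel₁ : (s + t * s') * d * q' = (s - e * s') * q
  rel₂ : (q - d * q') * q' = (s - e * s') * s'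

/-- Since `b` is one more than the floor of its complete quotient `U`, the difference
`d = b - U` lies in `(0, 1]`. -/
lemma floor_facts (U : ℝ) (hU : 1 < U) :
    2 ≤ ⌊U⌋₊ + 1 ∧ 0 < ((⌊U⌋₊ + 1 : ℕ) : ℝ) - U ∧ ((⌊U⌋₊ + 1 : ℕ) : ℝ) - U ≤ 1 := by
  have h1 := Nat.floor_le (by linarith : 0 ≤ U)
  have h2 := Nat.lt_floor_add_one U
  have h3 : 1 ≤ ⌊U⌋₊ := Nat.le_floor (by simpa using hU.le)
  push_cast
  exact ⟨by omega, by linarith, by linarith⟩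

lemma inv_one (α : ℝ) (hα : α ∈ Set.Icc (0 : ℝ) 1) (hdef : shulgaDefined α 1) :
    ∃ b c d t e ε p p' q q' r r' s s', Inv α 1 b c d t e ε p p' q q' r r' s s' := by
  have h0 : Int.fract α ≠ 0 := by
    simpa [pqDefined, cList, shulgaList, cf, gaussIter] using (hdef 0 (by norm_num)).1
  have hα0 : 0 < α := lt_of_le_of_ne hα.1 (by rintro rfl; simp at h0)
  have hα1 : α < 1 := lt_of_le_of_ne hα.2 (by rintro rfl; simp at h0)
  set U := 1 / α with hUdef
  have hU : 1 < U := by rwa [hUdef, one_lt_div hα0]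
  have hαU : α = 1 / U := by rw [hUdef]; simp
  obtain ⟨hb, hd0, hd1⟩ := floor_facts U hU
  have hB : shulgaB α 1 = ⌊U⌋₊ + 1 := by
    rw [shulgaB_succ]
    congr 1
    exact pq_eq [] (by simp) U hU _ (by simp [cList, shulgaList, cf, cfTail, hαU])
  have hbl : bList α 1 = [shulgaB α 1] := bList_succ α 0
  have hcl : cList α 1 = [shulgaC α 1] := cList_succ α 0
  generalize ⌊U⌋₊ + 1 = b at *
  set d := (b : ℝ) - U with hd
  have hb' : (2 : ℝ) ≤ b := by exact_mod_cast hb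
  set V := (b : ℝ) * (b - d) / d with hV
  have hUd : (b : ℝ) - d = U := by rw [hd]; ring
  have hV1 : 1 < V := by
    rw [hV, one_lt_div hd0, hUd]
    nlinarith
  have htail : α - cf (bList α 1) = 1 / V := by
    rw [hbl, hB, hV, hUd, hαU, hd]
    have : (b : ℝ) - U ≠ 0 := hd0.ne'
    simp only [cf]
    field_simp
    ring
  have hC : shulgaC α 1 = ⌊V⌋₊ := by
    rw [shulgaC_succ]
    exact pq_eq [] (by simp) V hV1 _ htail
  have hV2 := Nat.floor_le (by linarith : 0 ≤ V)
  have hV3 := Nat.lt_floor_add_one V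
  have hV4 : 1 ≤ ⌊V⌋₊ := Nat.le_floor (by simpa using hV1.le)
  rw [hC] at hcl
  rw [hB] at hbl
  generalize ⌊V⌋₊ = c at *
  have hnil : CfRep [] 1 0 1 1 0 := ⟨one_ne_zero, one_pos, le_rfl, by norm_num, by simp [cfTail]⟩
  refine ⟨b, c, d, V - c, c - (b - d), -1, b * 0 + 1, 0, b * 1 + 0, 1, c * 0 + 1, 0, c * 1 + 0, 1,
    .start b c d (V - c) hb hd0 hd1 (by linarith) (by linarith) (by rw [← hV]; ring), hB, ?_, ?_,
    ?_, ?_, one_pos, one_pos, ?_, ?_, ?_⟩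
  · rw [hbl]; simp; omega
  · rw [hcl]; simpa using hV4
  · rw [hbl]; exact hnil.append b (by omega)
  · rw [hcl]; exact hnil.append c hV4
  · rw [htail, hcl]; simp [cfTail]
  · have : V * d = b * (b - d) := by rw [hV]; field_simp
    linear_combination this
  · ring

/-- One step of the algorithm. The two relations of `Inv` identify the complete quotients
`U = e / (t * d)` and `V = (b₂ + 1 / d) / (t * d₂)` from which the next digits are read off. -/
lemma inv_succ (α : ℝ) (n : ℕ) {b c : ℕ} {d t e ε p p' q q' r r' s s' : ℝ}
    (h : Inv α n b c d t e ε p p' q q' r r' s s') (hdef : pqDefined (α - cf (cList α n)) (n + 1)) :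
    ∃ b c d t e ε p p' q q' r r' s s', Inv α (n + 1) b c d t e ε p p' q q' r r' s s' := by
  obtain ⟨horb, hb, hbpos, hcpos, hbrep, hcrep, hq', hs', htail, rel1, rel2⟩ := h
  obtain ⟨hb2, hc2, hd0, hd1, ht0, ht1, he⟩ := horb.basic
  have hq := hbrep.q_pos
  have hs := hcrep.q_pos
  have hn := horb.pos
  -- `t = 0` would mean that the algorithm has stopped
  have ht : 0 < t := by
    refine lt_of_le_of_ne ht0 ?_
    rintro rfl
    apply hdef
    rw [← cf_eq_cfTail] at htail
    obtain ⟨k, rfl⟩ : ∃ k, n = k + 1 := ⟨n - 1, by omega⟩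
    have : α - cf (cList α (k + 1)) = cf (bList α (k + 1)) := by linarith
    rw [this, Nat.add_sub_cancel]
    rw [bList_succ, hb] at hbpos ⊢
    have := gaussIter_cf (bList α k) (fun a ha => hbpos a (by simp [ha])) b hb2
    rwa [bList_length] at this
  have htd : 0 < t * d := by positivity
  set U := e / (t * d) with hUdef
  have hU : 1 < U := by rwa [hUdef, one_lt_div htd]
  have hUe : e = U * (t * d) := by rw [hUdef]; field_simp
  have key : s * d * q' + t * s' * d * q' = s * q - e * s' * q := by linarith
  -- `U` is the right complete quotient for `α - [0; c₁, …, cₙ]`: up to sign, both sides are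
  -- `1 / (α - [0; c₁, …, cₙ] - [0; b₁, …, bₙ])`
  have E1 : (U * q + q') * q = (s / t + s') * s := by
    have h1 : (e * q + t * d * q') * q' = s * (s - e * s') := by
      apply mul_right_cancel₀ hs'.ne'
      linear_combination q' * key + s * rel2
    have h2 : (e * q + t * d * q') * q = d * (s + t * s') * s := by
      apply mul_right_cancel₀ hq'.ne'
      linear_combination q * h1 - s * rel1
    rw [hUdef]
    field_simp
    linarith
  have hbtail : α - cf (cList α n) = cfTail (bList α n) (1 / U) := by
    have h1 := hbrep.sub (u := 1 / U) (v := 0) (by positivity) le_rfl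
    have h2 := hcrep.sub (u := t) (v := 0) ht0 le_rfl
    rw [cf_eq_cfTail] at htail ⊢
    have h3 : (1 / U - 0) / ((q + 1 / U * q') * (q + 0 * q')) =
        (t - 0) / ((s + t * s') * (s + 0 * s')) := by
      have : (U * q + q') * q * t = (s + s' * t) * s := by rw [E1]; field_simp
      rw [div_eq_div_iff (by positivity) (by positivity)]
      field_simp
      linear_combination -this
    rw [h3] at h1
    linarith
  obtain ⟨hb₂, hd₂0, hd₂1⟩ := floor_facts U hU
  have hB : shulgaB α (n + 1) = ⌊U⌋₊ + 1 := by
    rw [shulgaB_succ]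
    congr 1
    have := pq_eq _ hbpos U hU _ hbtail
    rwa [bList_length] at this
  have hbl := bList_succ α n
  have hcl := cList_succ α n
  rw [hB] at hbl
  generalize ⌊U⌋₊ + 1 = b₂ at *
  set d₂ := (b₂ : ℝ) - U with hd₂
  have hUd : (b₂ : ℝ) - d₂ = U := by rw [hd₂]; ring
  have hb₂' : (2 : ℝ) ≤ b₂ := by exact_mod_cast hb₂
  set V := ((b₂ : ℝ) + 1 / d) / (t * d₂) with hV
  have hV1 : 1 < V := by
    rw [hV, one_lt_div (by positivity)]
    have : 0 < 1 / d := by positivity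
    nlinarith [mul_le_one₀ ht1.le hd₂0.le hd₂1]
  -- the analogue for `V`, which becomes `rel₁` at `n + 1`, as `E1` becomes `rel₂`
  have E2 : (V * s + s') * d₂ * q = (s / t + s') * (b₂ * q + q') := by
    have h1 : V * d₂ = (b₂ + 1 / d) / t := by rw [hV]; field_simp
    have h2 : s * q / (t * d) = s * q' / t + s' * (U * q + q') := by
      rw [hUdef]
      field_simp
      linarith
    have h3 : (V * s + s') * d₂ * q = s * q * (V * d₂) + s' * q * d₂ := by ring
    rw [h3, h1, hd₂]
    have h4 : s * q * ((b₂ + 1 / d) / t) = s * q * b₂ / t + s * q / (t * d) := by field_simp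
    rw [h4, h2]
    ring
  have hctail : α - cf (bList α (n + 1)) = cfTail (cList α n) (1 / V) := by
    have h1 := hbrep.sub (u := 1 / U) (v := 1 / b₂) (by positivity) (by positivity)
    have h2 := hcrep.sub (u := 1 / V) (v := 0) (by positivity) le_rfl
    rw [hbl, cf_eq_cfTail, cfTail_append, add_zero]
    rw [cf_eq_cfTail] at hbtail
    have h3 : (1 / U - 1 / b₂) / ((q + 1 / U * q') * (q + 1 / b₂ * q')) =
        (1 / V - 0) / ((s + 1 / V * s') * (s + 0 * s')) := by
      have h4 : (V * s + s') * s * d₂ = (U * q + q') * (b₂ * q + q') := by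
        apply mul_right_cancel₀ hq.ne'
        linear_combination s * E2 - (b₂ * q + q') * E1
      have hV0 : 0 < V := by linarith
      have hU0 : 0 < U := by linarith
      rw [div_eq_div_iff (by positivity) (by positivity)]
      field_simp
      linear_combination h4
    rw [h3] at h1
    linarith
  have hC : shulgaC α (n + 1) = ⌊V⌋₊ := by
    rw [shulgaC_succ]
    have := pq_eq _ hcpos V hV1 _ hctail
    rwa [cList_length] at this
  have hV2 := Nat.floor_le (by linarith : 0 ≤ V)
  have hV3 := Nat.lt_floor_add_one V
  have hV4 : 1 ≤ ⌊V⌋₊ := Nat.le_floor (by simpa using hV1.le)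
  rw [hC] at hcl
  generalize ⌊V⌋₊ = c₂ at *
  refine ⟨b₂, c₂, d₂, V - c₂, c₂ - 1 / t, -ε, b₂ * p + p', p, b₂ * q + q', q,
    c₂ * r + r', r, c₂ * s + s', s,
    .step n b c d t e horb ht b₂ c₂ d₂ (V - c₂) hd₂0 hd₂1 (by linarith) (by linarith)
      (by rw [hUd]) (by rw [← hV]; ring), hB, ?_, ?_, ?_, ?_, hq, hs, ?_, ?_, ?_⟩
  · rw [hbl]
    intro a ha
    rcases List.mem_append.1 ha with ha | ha
    · exact hbpos a ha
    · rw [List.mem_singleton.1 ha]; omega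
  · rw [hcl]
    intro a ha
    rcases List.mem_append.1 ha with ha | ha
    · exact hcpos a ha
    · rw [List.mem_singleton.1 ha]; exact hV4
  · rw [hbl]; exact hbrep.append b₂ (by omega)
  · rw [hcl]; exact hcrep.append c₂ hV4
  · rw [hctail, hcl, cfTail_append]
    congr 2
    ring
  · linear_combination E2
  · rw [hd₂]
    linear_combination E1

lemma exists_inv (α : ℝ) (hα : α ∈ Set.Icc (0 : ℝ) 1) (n : ℕ) (hn : 1 ≤ n)
    (hdef : shulgaDefined α n) :
    ∃ b c d t e ε p p' q q' r r' s s', Inv α n b c d t e ε p p' q q' r r' s s' := by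
  induction n, hn using Nat.le_induction with
  | base => exact inv_one α hα hdef
  | succ n _ ih =>
    obtain ⟨b, c, d, t, e, ε, p, p', q, q', r, r', s, s', h⟩ :=
      ih fun k hk => hdef k (by omega)
    exact inv_succ α n h (hdef n (by omega)).1

/-- for `n ≥ 1`, the Shulga sequences satisfy `bₙ ≥ n`. -/
theorem stmt8 (α : ℝ) (hα : α ∈ Set.Icc (0 : ℝ) 1) (n : ℕ) (hn : 1 ≤ n)
    (hdef : shulgaDefined α n) : n ≤ shulgaB α n := by
  obtain ⟨b, c, d, t, e, ε, p, p', q, q', r, r', s, s', h⟩ := exists_inv α hα n hn hdef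
  rw [h.hb]
  exact Orbit.le n h.orbit

end ShulgaPaper
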